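/- Let K be an imaginary quadratic field with discriminant D, |D| > 4. Then the class number satisfies h_K ≤ |D|/4. -/

import Mathlib

open Module NumberField

/-- A primitive vector of a free `ℤ`-module of rank two is the first vector of a basis. -/
theorem exists_basis_of_primitive {M : Type*} [AddCommGroup M] (b : Basis (Fin 2) ℤ M) (v : M)
    (hv : ∀ (g : ℤ) (u : M), v = g • u → IsUnit g) :
    ∃ b' : Basis (Fin 2) ℤ M, b' 0 = v := by
  obtain ⟨p, q, hpq⟩ : ∃ p q : ℤ, v = p • b 0 + q • b 1 :=
    ⟨b.repr v 0, b.repr v 1, by rw [← Fin.sum_univ_two (fun i => b.repr v i • b i), b.sum_repr]⟩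
  have hcop : IsCoprime p q := by
    rw [Int.isCoprime_iff_gcd_eq_one]
    obtain ⟨p', hp'⟩ := Int.gcd_dvd_left p q
    obtain ⟨q', hq'⟩ := Int.gcd_dvd_right p q
    have := hv (Int.gcd p q) (p' • b 0 + q' • b 1) (by
      rw [smul_add, smul_smul, smul_smul, ← hp', ← hq', hpq])
    simpa using Int.isUnit_iff_natAbs_eq.mp this
  obtain ⟨u, t, hut⟩ := hcop
  set w : M := (-t) • b 0 + u • b 1 with hw
  have h0 : b 0 = u • v + (-q) • w := by
    have : b 0 = (u * p + t * q) • b 0 := by rw [hut, one_smul]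
    rw [hw, hpq]; nth_rewrite 1 [this]; module
  have h1 : b 1 = t • v + p • w := by
    have : b 1 = (u * p + t * q) • b 1 := by rw [hut, one_smul]
    rw [hw, hpq]; nth_rewrite 1 [this]; module
  have hli : LinearIndependent ℤ ![v, w] := by
    rw [LinearIndependent.pair_iff]
    intro x y hxy
    have hb := LinearIndependent.pair_iff.mp
      (show LinearIndependent ℤ ![b 0, b 1] by
        convert b.linearIndependent using 1
        ext i; fin_cases i <;> rfl)
    obtain ⟨e1, e2⟩ := hb (x * p - y * t) (x * q + y * u) (by
      rw [← hxy, hw, hpq]; module)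
    constructor
    · linear_combination u * e1 + t * e2 - x * hut
    · linear_combination -q * e1 + p * e2 - y * hut
  suffices hsp : ⊤ ≤ Submodule.span ℤ (Set.range ![v, w]) from
    ⟨Basis.mk hli hsp, by rw [Basis.mk_apply]; rfl⟩
  rw [← b.span_eq, Submodule.span_le]
  have hvm : v ∈ Submodule.span ℤ (Set.range ![v, w]) := Submodule.subset_span ⟨0, rfl⟩
  have hwm : w ∈ Submodule.span ℤ (Set.range ![v, w]) := Submodule.subset_span ⟨1, rfl⟩
  rintro _ ⟨i, rfl⟩
  fin_cases i
  · change b 0 ∈ _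
    rw [h0]
    exact add_mem (Submodule.smul_mem _ _ hvm) (Submodule.smul_mem _ _ hwm)
  · change b 1 ∈ _
    rw [h1]
    exact add_mem (Submodule.smul_mem _ _ hvm) (Submodule.smul_mem _ _ hwm)

/-- The discriminant of an imaginary quadratic field is negative. -/
theorem discr_neg_of_imag (K : Type*) [Field K] [NumberField K]
    (hdeg : Module.finrank ℚ K = 2) (himag : ∀ _ : K →+* ℝ, False) : discr K < 0 := by
  have h0 : InfinitePlace.nrRealPlaces K = 0 := by
    rw [nrRealPlaces_eq_zero_iff]
    refine ⟨fun w => ?_⟩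
    by_contra h
    rw [InfinitePlace.not_isComplex_iff_isReal] at h
    exact himag (InfinitePlace.embedding_of_isReal h)
  have h1 := InfinitePlace.card_add_two_mul_card_eq_rank K
  have h2 : InfinitePlace.nrComplexPlaces K = 1 := by omega
  have h3 := sign_discr K
  rw [h2] at h3
  exact Int.sign_eq_neg_one_iff_neg.mp (by simpa using h3)

/-- Existence of a generator `ω` with explicit norm form. -/
theorem exists_omega (K : Type*) [Field K] [NumberField K]
    (hdeg : Module.finrank ℚ K = 2) :
    ∃ (ω : 𝓞 K) (t : ℤ), Nonempty (Basis (Fin 2) ℤ (𝓞 K)) ∧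
      (∀ s : ℤ, 4 * Algebra.norm ℤ (ω - (s : 𝓞 K)) = (2 * s - t) ^ 2 - discr K) := by
  have hr : Module.finrank ℤ (𝓞 K) = 2 := by rw [RingOfIntegers.rank, hdeg]
  let b0 : Basis (Fin 2) ℤ (𝓞 K) := Module.finBasisOfFinrankEq ℤ (𝓞 K) hr
  obtain ⟨b, hb⟩ := exists_basis_of_primitive b0 1 (by
    intro g u h
    have h2 := congrArg (Algebra.norm ℤ) h
    rw [zsmul_eq_mul, map_mul, map_one] at h2
    have h3 : Algebra.norm ℤ ((g : 𝓞 K)) = g ^ 2 := by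
      have := Algebra.norm_algebraMap_of_basis b0 g
      simpa using this
    rw [h3] at h2
    exact IsUnit.of_mul_eq_one (g * Algebra.norm ℤ u) (by rw [h2]; ring))
  set ω := b 1 with hω
  obtain ⟨A, B, hAB⟩ : ∃ A B : ℤ, ω * ω = A • b 0 + B • b 1 :=
    ⟨b.repr (ω * ω) 0, b.repr (ω * ω) 1, by
      rw [← Fin.sum_univ_two (fun i => b.repr (ω * ω) i • b i), b.sum_repr]⟩
  have hM : ∀ x y : ℤ, Algebra.leftMulMatrix b (x • b 1 + y • b 0) =
      !![y, x * A; x, x * B + y] := by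
    intro x y
    ext i j
    rw [Algebra.leftMulMatrix_eq_repr_mul]
    have e0 : (x • b 1 + y • b 0) * b 0 = x • b 1 + y • b 0 := by rw [hb, mul_one]
    have e1 : (x • b 1 + y • b 0) * b 1 = (x * A) • b 0 + (x * B + y) • b 1 := by
      rw [add_mul, smul_mul_assoc, ← hω, hAB, hb, ← hω]
      simp only [zsmul_eq_mul]; push_cast; ring
    fin_cases j
    · change b.repr ((x • b 1 + y • b 0) * b 0) i = _
      rw [e0]
      rw [map_add, map_smul, map_smul, b.repr_self, b.repr_self]
      fin_cases i <;> simp [-zsmul_eq_mul]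
    · change b.repr ((x • b 1 + y • b 0) * b 1) i = _
      rw [e1]
      rw [map_add, map_smul, map_smul, b.repr_self, b.repr_self]
      fin_cases i <;> simp [-zsmul_eq_mul]
  have htr : ∀ x y : ℤ, Algebra.trace ℤ (𝓞 K) (x • b 1 + y • b 0) = x * B + 2 * y := by
    intro x y
    rw [Algebra.trace_eq_matrix_trace b, hM, Matrix.trace_fin_two_of]; ring
  have hnm : ∀ x y : ℤ, Algebra.norm ℤ (x • b 1 + y • b 0) = y * (x * B + y) - x * A * x := by
    intro x y
    rw [Algebra.norm_eq_matrix_det b, hM, Matrix.det_fin_two_of]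
  have hdis : discr K = B ^ 2 + 4 * A := by
    rw [← discr_eq_discr K b, Algebra.discr_def, Matrix.det_fin_two]
    simp only [Algebra.traceMatrix_apply, Algebra.traceForm_apply]
    have t00 : Algebra.trace ℤ (𝓞 K) (b 0 * b 0) = 2 := by
      have := htr 0 1
      rw [hb] at this ⊢
      simpa using this
    have t01 : Algebra.trace ℤ (𝓞 K) (b 0 * b 1) = B := by
      have := htr 1 0
      rw [hb, one_mul]
      simpa using this
    have t10 : Algebra.trace ℤ (𝓞 K) (b 1 * b 0) = B := by
      rw [mul_comm, t01]
    have t11 : Algebra.trace ℤ (𝓞 K) (b 1 * b 1) = B * B + 2 * A := by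
      rw [← hω, hAB, add_comm, htr]
    rw [t00, t01, t10, t11]; ring
  refine ⟨ω, B, ⟨b⟩, fun s => ?_⟩
  have : ω - (s : 𝓞 K) = (1 : ℤ) • b 1 + (-s) • b 0 := by
    rw [hb, one_smul, zsmul_eq_mul]; push_cast; ring
  rw [this, hnm, hdis]; ring

/-- Every ideal class is represented by an ideal `(a, ω - r)` with `3 a ^ 2 ≤ |D|`. -/
theorem exists_rep (K : Type*) [Field K] [NumberField K] (hneg : discr K < 0)
    (ω : 𝓞 K) (t : ℤ) (b : Basis (Fin 2) ℤ (𝓞 K))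
    (hN : ∀ s : ℤ, 4 * Algebra.norm ℤ (ω - (s : 𝓞 K)) = (2 * s - t) ^ 2 - discr K)
    (J : Ideal (𝓞 K)) (hJ : J ≠ ⊥) :
    ∃ (a r : ℕ) (v : 𝓞 K), 0 < a ∧ r < a ∧ 3 * a ^ 2 ≤ (discr K).natAbs ∧ v ≠ 0 ∧
      Ideal.span {(a : 𝓞 K)} * J = Ideal.span {v} * Ideal.span {(a : 𝓞 K), ω - (r : 𝓞 K)} := by
  have hNint : ∀ g : ℤ, Algebra.norm ℤ ((g : 𝓞 K)) = g ^ 2 := by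
    intro g
    have := Algebra.norm_algebraMap_of_basis b g
    simpa using this
  have hωne : ∀ s : ℤ, ω - (s : 𝓞 K) ≠ 0 := by
    intro s h
    have := hN s
    rw [h, Algebra.norm_zero] at this
    nlinarith [sq_nonneg (2 * s - t)]
  -- a nonzero element of minimal norm
  obtain ⟨v, ⟨hvJ, hv0⟩, hmin⟩ : ∃ v : 𝓞 K, (v ∈ J ∧ v ≠ 0) ∧
      ∀ u : 𝓞 K, (u ∈ J ∧ u ≠ 0) → (Algebra.norm ℤ v).natAbs ≤ (Algebra.norm ℤ u).natAbs := by
    obtain ⟨x, hx, hx0⟩ := Submodule.exists_mem_ne_zero_of_ne_bot hJ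
    have := WellFounded.wellFounded_iff_has_min.mp
      (measure (fun u : 𝓞 K => (Algebra.norm ℤ u).natAbs)).wf {u | u ∈ J ∧ u ≠ 0} ⟨x, hx, hx0⟩
    obtain ⟨v, hv, hm⟩ := this
    exact ⟨v, hv, fun u hu => not_lt.mp (hm u hu)⟩
  have hNv : 0 < (Algebra.norm ℤ v).natAbs := by
    rw [Int.natAbs_pos]; exact Algebra.norm_ne_zero_iff.mpr hv0
  obtain ⟨c, hc⟩ := exists_basis_of_primitive (Ideal.selfBasis b J hJ) ⟨v, hvJ⟩ (by
    intro g u h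
    have h1 : v = (g : 𝓞 K) * (u : 𝓞 K) := by
      have := congrArg (Subtype.val) h
      simpa [zsmul_eq_mul] using this
    have hu0 : (u : 𝓞 K) ≠ 0 := by
      rintro h; rw [h, mul_zero] at h1; exact hv0 h1
    have h2 := hmin u ⟨u.2, hu0⟩
    rw [h1, map_mul, hNint, Int.natAbs_mul, Int.natAbs_pow] at h2 hNv
    have h3 : 0 < (Algebra.norm ℤ (u : 𝓞 K)).natAbs := Nat.pos_of_mul_pos_left hNv
    have h4 : 0 < g.natAbs ^ 2 := Nat.pos_of_mul_pos_right hNv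
    rw [Int.isUnit_iff_natAbs_eq]
    have h5 : g.natAbs ^ 2 ≤ 1 := by
      by_contra h
      push Not at h
      nlinarith
    have : g.natAbs ≠ 0 := by rintro h; simp [h] at h4
    have : g.natAbs ≤ 1 := by nlinarith
    omega)
  have hcJ : ∀ z ∈ J, ∃ x y : ℤ, z = x * v + y * (c 1 : 𝓞 K) := by
    intro z hz
    refine ⟨c.repr ⟨z, hz⟩ 0, c.repr ⟨z, hz⟩ 1, ?_⟩
    have h := c.sum_repr ⟨z, hz⟩
    rw [Fin.sum_univ_two, hc] at h
    have := congrArg (Subtype.val) h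
    simpa [zsmul_eq_mul] using this.symm
  -- normalize the sign
  obtain ⟨a, m, w, ha, hwJ, hrel, hspan⟩ : ∃ (a m : ℤ) (w : 𝓞 K), 0 < a ∧ w ∈ J ∧
      v * (ω - (m : 𝓞 K)) = a * w ∧ ∀ z ∈ J, ∃ x y : ℤ, z = x * v + y * w := by
    obtain ⟨m, a, h⟩ := hcJ (v * ω) (J.mul_mem_right _ hvJ)
    have ha0 : a ≠ 0 := by
      rintro rfl
      have : v * (ω - (m : 𝓞 K)) = 0 := by rw [mul_sub, h]; push_cast; ring
      exact (mul_ne_zero hv0 (hωne m)) this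
    rcases lt_or_gt_of_ne ha0 with ha | ha
    · refine ⟨-a, m, -(c 1 : 𝓞 K), by omega, J.neg_mem (c 1).2, ?_, ?_⟩
      · rw [mul_sub, h]; push_cast; ring
      · intro z hz
        obtain ⟨x, y, hxy⟩ := hcJ z hz
        exact ⟨x, -y, by rw [hxy]; push_cast; ring⟩
    · refine ⟨a, m, (c 1 : 𝓞 K), ha, (c 1).2, ?_, hcJ⟩
      rw [mul_sub, h]; ring
  -- the bound
  have hbound : 3 * a ^ 2 ≤ -discr K := by
    have hk : ∀ k : ℤ, a ^ 2 ≤ Algebra.norm ℤ (ω - ((m + k * a : ℤ) : 𝓞 K)) := by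
      intro k
      have e : v * (ω - ((m + k * a : ℤ) : 𝓞 K)) = (a : 𝓞 K) * (w - k * v) := by
        push_cast; linear_combination hrel
      have hne : w - k * v ≠ 0 := by
        intro h
        rw [h, mul_zero] at e
        exact mul_ne_zero hv0 (hωne _) e
      have h1 := hmin (w - k * v) ⟨J.sub_mem hwJ (J.mul_mem_left _ hvJ), hne⟩
      have h2 := congrArg (fun x => (Algebra.norm ℤ x).natAbs) e
      simp only [map_mul, hNint, Int.natAbs_mul, Int.natAbs_pow] at h2
      have h3 : a.natAbs ^ 2 ≤ (Algebra.norm ℤ (ω - ((m + k * a : ℤ) : 𝓞 K))).natAbs := by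
        by_contra h
        push Not at h
        nlinarith
      have h4 : 0 ≤ Algebra.norm ℤ (ω - ((m + k * a : ℤ) : 𝓞 K)) := by
        have := hN (m + k * a)
        nlinarith [sq_nonneg (2 * (m + k * a) - t)]
      have h5 : (a.natAbs : ℤ) ^ 2 ≤
          ((Algebra.norm ℤ (ω - ((m + k * a : ℤ) : 𝓞 K))).natAbs : ℤ) := by exact_mod_cast h3
      rw [Int.natAbs_of_nonneg h4, Int.natAbs_of_nonneg ha.le] at h5
      exact h5
    -- choose `k` with `|2 (m + k a) - t| ≤ a`
    obtain ⟨k, hk1, hk2⟩ : ∃ k : ℤ, -a ≤ 2 * (m + k * a) - t ∧ 2 * (m + k * a) - t ≤ a := by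
      refine ⟨-((2 * m - t + a) / (2 * a)), ?_, ?_⟩
      · have := Int.emod_nonneg (2 * m - t + a) (show 2 * a ≠ 0 by omega)
        have h2 := Int.mul_ediv_add_emod (2 * m - t + a) (2 * a)
        nlinarith
      · have := Int.emod_lt_of_pos (2 * m - t + a) (show 0 < 2 * a by omega)
        have h2 := Int.mul_ediv_add_emod (2 * m - t + a) (2 * a)
        nlinarith
    have h1 := hk k
    have h2 := hN (m + k * a)
    have h3 : (2 * (m + k * a) - t) ^ 2 ≤ a ^ 2 := sq_le_sq' hk1 hk2
    linarith
  have hr0 := Int.emod_nonneg m ha.ne'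
  have hr1 := Int.emod_lt_of_pos m ha
  have hdm := Int.mul_ediv_add_emod m a
  have hca : ((a.toNat : ℕ) : 𝓞 K) = (a : 𝓞 K) := by
    rw [← Int.cast_natCast, Int.toNat_of_nonneg ha.le]
  have hcr : (((m % a).toNat : ℕ) : 𝓞 K) = ((m % a : ℤ) : 𝓞 K) := by
    rw [← Int.cast_natCast, Int.toNat_of_nonneg hr0]
  refine ⟨a.toNat, (m % a).toNat, v, by omega, by omega, ?_, hv0, ?_⟩
  · zify
    rw [Int.toNat_of_nonneg ha.le, abs_of_neg hneg]; exact hbound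
  rw [hca, hcr]
  set q := m / a
  set r := m % a
  have hdm' : (m : 𝓞 K) = a * q + r := by rw [← hdm]; push_cast; ring
  apply le_antisymm
  · rw [Ideal.span_singleton_mul_le_span_singleton_mul]
    intro z hz
    obtain ⟨x, y, hxy⟩ := hspan z hz
    refine ⟨x * a + y * (ω - m), ?_, ?_⟩
    · rw [Ideal.mem_span_pair]
      exact ⟨x - y * q, y, by rw [hdm']; ring⟩
    · rw [hxy]
      linear_combination (-(y : 𝓞 K)) * hrel
  · rw [Ideal.span_singleton_mul_le_span_singleton_mul]
    intro z hz
    obtain ⟨x, y, rfl⟩ := Ideal.mem_span_pair.mp hz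
    refine ⟨x * v + y * (w + q * v), ?_, ?_⟩
    · exact J.add_mem (J.mul_mem_left _ hvJ)
        (J.mul_mem_left _ (J.add_mem hwJ (J.mul_mem_left _ hvJ)))
    · rw [hdm'] at hrel
      linear_combination y * hrel

/-- For an imaginary quadratic field `K` with discriminant `D`, `|D| > 4`, the
class number satisfies `h_K ≤ |D|/4`. -/
theorem classNumber_le_discr_div_four (K : Type*) [Field K] [NumberField K]
    (hdeg : Module.finrank ℚ K = 2) (himag : ∀ _ : K →+* ℝ, False)
    (hD : 4 < (NumberField.discr K).natAbs) :
    4 * NumberField.classNumber K ≤ (NumberField.discr K).natAbs := by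
  classical
  have hneg := discr_neg_of_imag K hdeg himag
  obtain ⟨ω, t, ⟨b⟩, hN⟩ := exists_omega K hdeg
  set D := (NumberField.discr K).natAbs with hDdef
  set A := Nat.sqrt (D / 3) with hA
  let S : Finset (Σ _ : ℕ, ℕ) := (Finset.range (A + 1)).sigma (fun a => Finset.range a)
  let f : (Σ _ : ℕ, ℕ) → ClassGroup (𝓞 K) := fun p =>
    if h : Ideal.span {(p.1 : 𝓞 K), ω - (p.2 : 𝓞 K)} ∈ nonZeroDivisors (Ideal (𝓞 K)) then
      ClassGroup.mk0 ⟨_, h⟩ else 1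
  have hsurj : (Finset.univ : Finset (ClassGroup (𝓞 K))) ⊆ S.image f := by
    intro C _
    obtain ⟨⟨J, hJ⟩, rfl⟩ := ClassGroup.mk0_surjective C
    obtain ⟨a, r, v, ha, hra, hb, hv, hEq⟩ :=
      exists_rep K hneg ω t b hN J (nonZeroDivisors.ne_zero hJ)
    rw [Finset.mem_image]
    have ha0 : (a : 𝓞 K) ≠ 0 := by exact_mod_cast ha.ne'
    have hmem : Ideal.span {(a : 𝓞 K), ω - (r : 𝓞 K)} ∈ nonZeroDivisors (Ideal (𝓞 K)) := by
      rw [mem_nonZeroDivisors_iff_ne_zero]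
      intro h
      have : (a : 𝓞 K) ∈ Ideal.span {(a : 𝓞 K), ω - (r : 𝓞 K)} :=
        Ideal.subset_span (by simp)
      rw [h] at this
      exact ha0 (by simpa using this)
    refine ⟨⟨a, r⟩, ?_, ?_⟩
    · simp only [S, Finset.mem_sigma, Finset.mem_range]
      refine ⟨?_, hra⟩
      rw [Nat.lt_succ_iff, hA, Nat.le_sqrt, Nat.le_div_iff_mul_le (by norm_num)]
      rw [hDdef]
      nlinarith
    · simp only [f]
      rw [dif_pos hmem, eq_comm, ClassGroup.mk0_eq_mk0_iff]
      exact ⟨a, v, ha0, hv, hEq⟩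
  have hcard : NumberField.classNumber K ≤ S.card := by
    rw [NumberField.classNumber, ← Finset.card_univ]
    exact (Finset.card_le_card hsurj).trans Finset.card_image_le
  have hS : S.card * 2 = (A + 1) * A := by
    have := Finset.sum_range_id_mul_two (A + 1)
    simpa [S, Finset.card_sigma] using this
  have hA2 : A * A ≤ D / 3 := Nat.sqrt_le _
  have hA3 : 3 * (A * A) ≤ D := by omega
  have hfin : 2 * ((A + 1) * A) ≤ D := by
    rcases Nat.lt_or_ge A 2 with h | h
    · interval_cases A <;> omega
    · nlinarith
  omega
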